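/- arXiv:2510.11273 — 4 statements merged into one kernel-verified Lean document; each statement's English description precedes it below -/
import Mathlib

section
/- Let n ≥ 2, let r be an integer with (n+1)/2 < r ≤ n, let α ∈ (0, 1/2) and t = Φ⁻¹(1 − α/(n−r+1)). Fix θ₂,…,θₙ with θᵢ ≥ 0 for i = 2,…,r−1 and θᵢ = 0 for i = r,…,n, and for u ∈ ℝ let c(u) = P(#{i : Tᵢ ≤ −t} ≥ r or #{i : Tᵢ ≥ t} ≥ r) where T₁ ~ N(u,1), Tᵢ ~ N(θᵢ,1) are independent. Then c is differentiable and its derivative is strictly positive at every u > 0; consequently c is strictly increasing on (0, ∞). -/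
open MeasureTheory ProbabilityTheory

/-- The cumulative distribution function `Φ` of the standard normal distribution. -/
noncomputable def stdNormalCDF (x : ℝ) : ℝ :=
  ((gaussianReal 0 1) (Set.Iic x)).toReal

/-- Expectation of `h (number of successes)` for independent trials indexed by `s` with success
probabilities `a`. -/
noncomputable def pbE {ι : Type*} [DecidableEq ι] (a : ι → ℝ) (s : Finset ι) (h : ℕ → ℝ) : ℝ :=
  ∑ S ∈ s.powerset, (∏ i ∈ s, if i ∈ S then a i else 1 - a i) * h S.card

theorem pbE_insert {ι : Type*} [DecidableEq ι] (a : ι → ℝ) (s : Finset ι) (h : ℕ → ℝ) (j : ι)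
    (hj : j ∉ s) :
    pbE a (insert j s) h = a j * pbE a s (fun k => h (k + 1)) + (1 - a j) * pbE a s h := by
  unfold pbE
  rw [Finset.sum_powerset_insert hj, add_comm, Finset.mul_sum, Finset.mul_sum]
  congr 1
  · refine Finset.sum_congr rfl fun S hS => ?_
    have hjS : j ∉ S := fun h' => hj (Finset.mem_powerset.1 hS h')
    rw [Finset.prod_insert hj, Finset.card_insert_of_notMem hjS, if_pos (Finset.mem_insert_self _ _)]
    have : ∏ i ∈ s, (if i ∈ insert j S then a i else 1 - a i)
        = ∏ i ∈ s, (if i ∈ S then a i else 1 - a i) := by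
      refine Finset.prod_congr rfl fun i hi => ?_
      have : i ≠ j := fun e => hj (e ▸ hi)
      simp [this]
    rw [this]; ring
  · refine Finset.sum_congr rfl fun S hS => ?_
    have hjS : j ∉ S := fun h' => hj (Finset.mem_powerset.1 hS h')
    rw [Finset.prod_insert hj, if_neg hjS]; ring

theorem pbE_sub {ι : Type*} [DecidableEq ι] (a : ι → ℝ) (s : Finset ι) (h g : ℕ → ℝ) :
    pbE a s h - pbE a s g = pbE a s (fun k => h k - g k) := by
  unfold pbE
  rw [← Finset.sum_sub_distrib]
  exact Finset.sum_congr rfl fun S _ => by ring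

theorem pbE_congr {ι : Type*} [DecidableEq ι] (a b : ι → ℝ) (s : Finset ι) (h : ℕ → ℝ)
    (hab : ∀ i ∈ s, a i = b i) : pbE a s h = pbE b s h := by
  unfold pbE
  refine Finset.sum_congr rfl fun S _ => ?_
  congr 1
  exact Finset.prod_congr rfl fun i hi => by rw [hab i hi]

theorem pbE_pos {ι : Type*} [DecidableEq ι] (a : ι → ℝ) (s : Finset ι) (k : ℕ)
    (ha : ∀ i ∈ s, 0 < a i ∧ a i < 1) (hk : k ≤ s.card) :
    0 < pbE a s (fun m => if m = k then 1 else 0) := by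
  unfold pbE
  have hp : ∀ S : Finset ι, 0 < ∏ i ∈ s, (if i ∈ S then a i else 1 - a i) := by
    intro S
    refine Finset.prod_pos fun i hi => ?_
    have := ha i hi
    split_ifs <;> linarith
  obtain ⟨S, hS, hc⟩ := Finset.exists_subset_card_eq hk
  refine Finset.sum_pos' (fun S _ => mul_nonneg (hp S).le (by dsimp only; split_ifs <;> norm_num))
    ⟨S, Finset.mem_powerset.2 hS, ?_⟩
  simp only [hc, if_true, mul_one]; exact hp S

theorem pbE_shift {ι : Type*} [DecidableEq ι] (p : ι → ℝ) (z s : Finset ι)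
    (hd : Disjoint s z) (hp : ∀ i ∈ s, 0 ≤ p i ∧ p i ≤ 1) (h : ℕ → ℝ)
    (hh : ∀ j ≤ s.card, pbE p z (fun k => h (k + j)) ≤ pbE p z (fun k => h (k + (j + 1)))) :
    pbE p (s ∪ z) h ≤ pbE p (s ∪ z) (fun k => h (k + 1)) := by
  induction s using Finset.induction_on generalizing h with
  | empty => simpa using hh 0 (by simp)
  | insert i s his ih =>
    have hd' := Finset.disjoint_insert_left.1 hd
    have hn : i ∉ s ∪ z := by simp [his, hd'.1]
    rw [Finset.card_insert_of_notMem his] at hh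
    rw [Finset.insert_union, pbE_insert _ _ _ _ hn, pbE_insert _ _ _ _ hn]
    have h1 := ih hd'.2 (fun k hk => hp k (Finset.mem_insert_of_mem hk)) h
      (fun j hj => hh j (by omega))
    have h2 := ih hd'.2 (fun k hk => hp k (Finset.mem_insert_of_mem hk)) (fun k => h (k + 1))
      (fun j hj => by
        have := hh (j + 1) (by omega)
        simpa only [add_assoc, add_comm 1] using this)
    obtain ⟨h3, h4⟩ := hp i (Finset.mem_insert_self _ _)
    have := mul_le_mul_of_nonneg_left h2 h3
    have := mul_le_mul_of_nonneg_left h1 (sub_nonneg.2 h4)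
    linarith

theorem pbE_mono {ι : Type*} [DecidableEq ι] (q p : ι → ℝ) (z s : Finset ι)
    (hd : Disjoint s z) (hqp : ∀ i ∈ s, 0 ≤ q i ∧ q i ≤ p i ∧ p i ≤ 1)
    (hz : ∀ i ∈ z, q i = p i) (h : ℕ → ℝ)
    (hh : ∀ j < s.card, pbE p z (fun k => h (k + j)) ≤ pbE p z (fun k => h (k + (j + 1)))) :
    pbE q (s ∪ z) h ≤ pbE p (s ∪ z) h := by
  induction s using Finset.induction_on generalizing h with
  | empty => simpa using (pbE_congr q p z h hz).le
  | insert i s his ih =>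
    have hd' := Finset.disjoint_insert_left.1 hd
    have hn : i ∉ s ∪ z := by simp [his, hd'.1]
    rw [Finset.card_insert_of_notMem his] at hh
    rw [Finset.insert_union, pbE_insert _ _ _ _ hn, pbE_insert _ _ _ _ hn]
    have h1 := ih hd'.2 (fun k hk => hqp k (Finset.mem_insert_of_mem hk)) h
      (fun j hj => hh j (by omega))
    have h2 := ih hd'.2 (fun k hk => hqp k (Finset.mem_insert_of_mem hk)) (fun k => h (k + 1))
      (fun j hj => by
        have := hh (j + 1) (by omega)
        simpa only [add_assoc, add_comm 1] using this)
    have h0 := pbE_shift p z s hd'.2 (fun k hk => by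
      have := hqp k (Finset.mem_insert_of_mem hk)
      exact ⟨this.1.trans this.2.1, this.2.2⟩) h (fun j hj => hh j (by omega))
    obtain ⟨h3, h4, h5⟩ := hqp i (Finset.mem_insert_self _ _)
    have := mul_le_mul_of_nonneg_left h2 h3
    have := mul_le_mul_of_nonneg_left h1 (sub_nonneg.2 (h4.trans h5))
    have := mul_le_mul_of_nonneg_left h0 (sub_nonneg.2 h4)
    linarith

theorem pbE_const {ι : Type*} [DecidableEq ι] (p : ι → ℝ) (z : Finset ι) (x : ℝ)
    (hz : ∀ i ∈ z, p i = x) (k : ℕ) :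
    pbE p z (fun m => if m = k then 1 else 0) = z.card.choose k * (x ^ k * (1 - x) ^ (z.card - k)) := by
  have h1 : pbE p z (fun m => if m = k then 1 else 0)
      = ∑ S ∈ z.powerset, (fun m : ℕ => (x ^ m * (1 - x) ^ (z.card - m)) * if m = k then (1:ℝ) else 0) S.card := by
    rw [pbE_congr p (fun _ => x) z _ hz]
    unfold pbE
    refine Finset.sum_congr rfl fun S hS => ?_
    have hS := Finset.mem_powerset.1 hS
    rw [Finset.prod_ite, Finset.prod_const, Finset.prod_const, Finset.filter_mem_eq_inter,
      Finset.filter_notMem_eq_sdiff, Finset.inter_eq_right.2 hS, Finset.card_sdiff_of_subset hS]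
  rw [h1, Finset.sum_powerset_apply_card (fun m : ℕ => (x ^ m * (1 - x) ^ (z.card - m)) * if m = k then (1:ℝ) else 0)]
  simp only [mul_ite, mul_one, mul_zero, nsmul_eq_mul, Finset.sum_ite_eq', Finset.mem_range]
  split_ifs with hk
  · rfl
  · rw [Nat.choose_eq_zero_of_lt (by omega)]; simp

theorem pbE_const_anti {ι : Type*} [DecidableEq ι] (p : ι → ℝ) (z : Finset ι) (x : ℝ)
    (hz : ∀ i ∈ z, p i = x) (hx0 : 0 ≤ x) (hx1 : x ≤ 1 / 2) (hx : z.card * x ≤ 1 / 2) (k : ℕ) :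
    pbE p z (fun m => if m = k + 1 then 1 else 0) ≤ pbE p z (fun m => if m = k then 1 else 0) := by
  rw [pbE_const p z x hz, pbE_const p z x hz]
  rcases Nat.lt_or_ge k z.card with hk | hk
  · obtain ⟨d, hd⟩ : ∃ d, z.card = k + 1 + d := ⟨z.card - (k + 1), by omega⟩
    have hc := Nat.choose_succ_right_eq z.card k
    have e1 : z.card - (k + 1) = d := by omega
    have e2 : z.card - k = d + 1 := by omega
    rw [e1, e2]
    rw [e2] at hc
    have hc' : (z.card.choose (k + 1) : ℝ) * (k + 1) = z.card.choose k * (d + 1) := by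
      exact_mod_cast hc
    have hA : (0:ℝ) ≤ z.card.choose (k + 1) := by positivity
    have hB : (0:ℝ) ≤ z.card.choose k := by positivity
    have hdx : ((d:ℝ) + 1) * x ≤ 1 / 2 := by
      have : ((d:ℝ) + 1) ≤ (z.card : ℝ) := by exact_mod_cast (by omega : d + 1 ≤ z.card)
      nlinarith
    have key : (z.card.choose (k + 1) : ℝ) * x ≤ z.card.choose k * (1 - x) := by
      have a1 : (z.card.choose (k + 1) : ℝ) * x ≤ (z.card.choose (k + 1) : ℝ) * (k + 1) * x := by
        have : (0:ℝ) ≤ z.card.choose (k + 1) * x * k := by positivity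
        nlinarith
      rw [hc'] at a1
      have a2 := mul_le_mul_of_nonneg_left (hdx.trans (by linarith : (1:ℝ) / 2 ≤ 1 - x)) hB
      linarith
    have hx2 : (0:ℝ) ≤ x ^ k * (1 - x) ^ d :=
      mul_nonneg (pow_nonneg hx0 _) (pow_nonneg (by linarith) _)
    have := mul_le_mul_of_nonneg_right key hx2
    calc _ = (z.card.choose (k + 1) : ℝ) * x * (x ^ k * (1 - x) ^ d) := by ring
      _ ≤ _ := this
      _ = _ := by ring
  · rw [Nat.choose_eq_zero_of_lt (by omega : z.card < k + 1)]
    have : (0:ℝ) ≤ x ^ k * (1 - x) ^ (z.card - k) :=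
      mul_nonneg (pow_nonneg hx0 _) (pow_nonneg (by linarith) _)
    have := mul_nonneg (Nat.cast_nonneg (α := ℝ) (z.card.choose k)) this
    simpa using this

theorem pi_real_count {ι : Type*} [Fintype ι] [DecidableEq ι] (μ : ι → Measure ℝ)
    [∀ i, IsProbabilityMeasure (μ i)] (A : Set ℝ) (hA : MeasurableSet A) [DecidablePred (· ∈ A)]
    (r : ℕ) :
    MeasurableSet {x : ι → ℝ | r ≤ (Finset.univ.filter fun i => x i ∈ A).card} ∧
    (Measure.pi μ).real {x : ι → ℝ | r ≤ (Finset.univ.filter fun i => x i ∈ A).card}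
      = pbE (fun i => (μ i).real A) Finset.univ (fun k => if r ≤ k then 1 else 0) := by
  have hset : {x : ι → ℝ | r ≤ (Finset.univ.filter fun i => x i ∈ A).card}
      = ⋃ S ∈ (Finset.univ : Finset (Finset ι)).filter (fun S => r ≤ S.card),
          Set.univ.pi (fun i => if i ∈ S then A else Aᶜ) := by
    ext x
    simp only [Set.mem_ofPred_eq, Finset.mem_filter, Finset.mem_univ, true_and, Set.mem_iUnion,
      Set.mem_pi, Set.mem_univ, true_imp_iff, exists_prop]
    constructor
    · intro h
      refine ⟨_, h, fun i => ?_⟩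
      by_cases hi : x i ∈ A <;> simp [hi]
    · rintro ⟨S, hS, h⟩
      have : (Finset.univ.filter fun i => x i ∈ A) = S := by
        ext i
        have := h i
        by_cases hi : i ∈ S <;> simp_all
      rwa [this]
  have hm : ∀ S : Finset ι, MeasurableSet (Set.univ.pi (fun i => if i ∈ S then A else Aᶜ)) := by
    intro S
    refine MeasurableSet.univ_pi fun i => ?_
    split_ifs
    · exact hA
    · exact hA.compl
  rw [hset]
  refine ⟨Finset.measurableSet_biUnion _ fun S _ => hm S, ?_⟩
  rw [measureReal_biUnion_finset]
  · unfold pbE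
    rw [Finset.powerset_univ, Finset.sum_filter]
    refine Finset.sum_congr rfl fun S _ => ?_
    dsimp only
    split_ifs
    · rw [mul_one, measureReal_def, Measure.pi_pi, ENNReal.toReal_prod]
      refine Finset.prod_congr rfl fun i _ => ?_
      split_ifs
      · rfl
      · rw [← measureReal_def, probReal_compl_eq_one_sub hA]
    · rw [mul_zero]
  · intro S _ S' _ hne
    refine Set.disjoint_left.2 fun x hx hx' => hne ?_
    ext i
    have h1 := hx i trivial
    have h2 := hx' i trivial
    by_cases hi : i ∈ S <;> by_cases hi' : i ∈ S' <;> simp_all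
  · exact fun S _ => hm S

/-- Splitting off one trial. -/
theorem pbE_tail_split {ι : Type*} [DecidableEq ι] (a : ι → ℝ) (s : Finset ι) (j : ι)
    (hj : j ∉ s) (r : ℕ) (hr : 1 ≤ r) :
    pbE a (insert j s) (fun k => if r ≤ k then 1 else 0)
      = a j * pbE a s (fun m => if m = r - 1 then 1 else 0)
        + pbE a s (fun k => if r ≤ k then 1 else 0) := by
  rw [pbE_insert _ _ _ _ hj]
  have := pbE_sub a s (fun k => if r ≤ k + 1 then 1 else 0) (fun k => if r ≤ k then 1 else 0)
  have e : (fun k : ℕ => (if r ≤ k + 1 then (1:ℝ) else 0) - (if r ≤ k then 1 else 0))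
      = (fun m => if m = r - 1 then 1 else 0) := by
    funext k
    split_ifs <;> first | omega | norm_num
  rw [e] at this
  rw [← this]; ring

theorem stdNormalCDF_real (x : ℝ) : stdNormalCDF x = (gaussianReal 0 1).real (Set.Iic x) := rfl

theorem gauss_Iic (m x : ℝ) : (gaussianReal m 1).real (Set.Iic x) = stdNormalCDF (x - m) := by
  rw [stdNormalCDF_real]
  have := gaussianReal_map_add_const (μ := 0) (v := 1) m
  rw [zero_add] at this
  rw [← this, measureReal_def, Measure.map_apply (by fun_prop) measurableSet_Iic, ← measureReal_def]
  congr 1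
  ext y; simp [le_sub_iff_add_le]

theorem gauss_Ici (m x : ℝ) : (gaussianReal m 1).real (Set.Ici x) = stdNormalCDF (m - x) := by
  have := gaussianReal_map_neg (μ := -m) (v := 1)
  rw [neg_neg] at this
  rw [← this, measureReal_def, Measure.map_apply (by fun_prop) measurableSet_Ici, ← measureReal_def]
  have e : (fun x : ℝ => -x) ⁻¹' Set.Ici x = Set.Iic (-x) := by
    ext y; simp
  rw [e, gauss_Iic]
  congr 1; ring

theorem stdNormalCDF_neg (x : ℝ) : stdNormalCDF (-x) = 1 - stdNormalCDF x := by
  have h1 := gauss_Ici 0 x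
  rw [zero_sub] at h1
  have := nullSingletonClass_gaussianReal (μ := 0) (v := 1) one_ne_zero
  have h2 : (gaussianReal 0 1).real (Set.Ici x) = (gaussianReal 0 1).real (Set.Ioi x) :=
    measureReal_congr Ioi_ae_eq_Ici.symm
  rw [← h1, h2, stdNormalCDF_real, ← Set.compl_Iic, probReal_compl_eq_one_sub measurableSet_Iic]

theorem stdNormalCDF_hasDerivAt (x : ℝ) :
    HasDerivAt stdNormalCDF (gaussianPDFReal 0 1 x) x := by
  have hi := integrable_gaussianPDFReal 0 1
  have hc : Continuous (gaussianPDFReal 0 1) := by unfold gaussianPDFReal; fun_prop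
  have e : stdNormalCDF = fun x => stdNormalCDF 0 + ∫ y in (0:ℝ)..x, gaussianPDFReal 0 1 y := by
    have h : ∀ x, stdNormalCDF x = ∫ y in Set.Iic x, gaussianPDFReal 0 1 y := by
      intro x
      unfold stdNormalCDF
      rw [gaussianReal_apply_eq_integral _ one_ne_zero, ENNReal.toReal_ofReal]
      exact integral_nonneg fun y => gaussianPDFReal_nonneg _ _ _
    funext x
    rw [← intervalIntegral.integral_Iic_sub_Iic hi.integrableOn hi.integrableOn, h, h]
    ring
  rw [e]
  exact (intervalIntegral.integral_hasDerivAt_right hi.intervalIntegrable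
    (hc.stronglyMeasurableAtFilter _ _) hc.continuousAt).const_add _

theorem stdNormalCDF_strictMono : StrictMono stdNormalCDF :=
  strictMono_of_deriv_pos fun x => by
    rw [(stdNormalCDF_hasDerivAt x).deriv]
    exact gaussianPDFReal_pos _ _ _ one_ne_zero

theorem stdNormalCDF_pos (x : ℝ) : 0 < stdNormalCDF x :=
  lt_of_le_of_lt (ENNReal.toReal_nonneg) (stdNormalCDF_strictMono (sub_one_lt x))

theorem stdNormalCDF_lt_one (x : ℝ) : stdNormalCDF x < 1 := by
  have := stdNormalCDF_pos (-x)
  rw [stdNormalCDF_neg] at this; linarith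

theorem pdf_lt {t u : ℝ} (ht : 0 < t) (hu : 0 < u) :
    gaussianPDFReal 0 1 (-t - u) < gaussianPDFReal 0 1 (u - t) := by
  unfold gaussianPDFReal
  have : (0:ℝ) < (√(2 * Real.pi * ((1 : NNReal) : ℝ)))⁻¹ := by
    have := Real.pi_pos
    simp; positivity
  refine mul_lt_mul_of_pos_left (Real.exp_lt_exp.2 ?_) this
  simp
  nlinarith [mul_pos ht hu]

/-- **Monotonicity of the Type I error in the first positive mean.** Let `(n+1)/2 < r ≤ n`,
`α ∈ (0,1/2)`, `t = Φ⁻¹(1 − α/(n−r+1))`, and fix `θ₂,…,θₙ` with `θᵢ ≥ 0` for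
`i = 2,…,r−1` and `θᵢ = 0` for `i = r,…,n` (0-indexed below). For `u ∈ ℝ` let
`c(u) = P(#{i : Tᵢ ≤ −t} ≥ r or #{i : Tᵢ ≥ t} ≥ r)` with `T₁ ~ N(u,1)`, `Tᵢ ~ N(θᵢ,1)`
independent. Then `c` is differentiable, `c' (u) > 0` for every `u > 0`, and `c` is
strictly increasing on `(0, ∞)`. -/
theorem type_one_error_increasing_in_first_mean
    (n r : ℕ) (hn : 2 ≤ n) (hr1 : ((n : ℝ) + 1) / 2 < (r : ℝ)) (hrn : r ≤ n)
    (α : ℝ) (hα0 : 0 < α) (hα1 : α < 1 / 2)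
    (t : ℝ) (ht : stdNormalCDF t = 1 - α / ((n : ℝ) - (r : ℝ) + 1))
    (θ : Fin n → ℝ)
    (hθpos : ∀ i : Fin n, 1 ≤ (i : ℕ) → (i : ℕ) + 1 < r → 0 ≤ θ i)
    (hθzero : ∀ i : Fin n, r ≤ (i : ℕ) + 1 → θ i = 0) :
    Differentiable ℝ
      (fun u : ℝ =>
        ((Measure.pi fun i : Fin n =>
            gaussianReal (if (i : ℕ) = 0 then u else θ i) 1)
          {x | r ≤ (Finset.univ.filter fun i : Fin n => x i ≤ -t).card ∨
               r ≤ (Finset.univ.filter fun i : Fin n => t ≤ x i).card}).toReal) ∧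
    (∀ u : ℝ, 0 < u →
      0 < deriv
        (fun u : ℝ =>
          ((Measure.pi fun i : Fin n =>
              gaussianReal (if (i : ℕ) = 0 then u else θ i) 1)
            {x | r ≤ (Finset.univ.filter fun i : Fin n => x i ≤ -t).card ∨
                 r ≤ (Finset.univ.filter fun i : Fin n => t ≤ x i).card}).toReal) u) ∧
    StrictMonoOn
      (fun u : ℝ =>
        ((Measure.pi fun i : Fin n =>
            gaussianReal (if (i : ℕ) = 0 then u else θ i) 1)
          {x | r ≤ (Finset.univ.filter fun i : Fin n => x i ≤ -t).card ∨
               r ≤ (Finset.univ.filter fun i : Fin n => t ≤ x i).card}).toReal)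
      (Set.Ioi 0) := by
  have hr2 : n + 1 < 2 * r := by
    have : (n:ℝ) + 1 < 2 * r := by linarith
    exact_mod_cast this
  have hn1 : (1:ℝ) ≤ (n:ℝ) - r + 1 := by
    have : (r:ℝ) ≤ n := by exact_mod_cast hrn
    linarith
  have hx : stdNormalCDF (-t) = α / ((n : ℝ) - (r : ℝ) + 1) := by
    rw [stdNormalCDF_neg, ht]; ring
  have hxα : ((n : ℝ) - (r : ℝ) + 1) * stdNormalCDF (-t) = α := by
    rw [hx]; field_simp
  have hxpos := stdNormalCDF_pos (-t)
  have hxhalf : stdNormalCDF (-t) < 1 / 2 := by nlinarith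
  have ht0 : 0 < t := by
    by_contra hcon
    have h1 := stdNormalCDF_strictMono.monotone (by linarith : t ≤ -t)
    rw [stdNormalCDF_neg] at h1 hxhalf
    linarith
  -- index sets
  set i0 : Fin n := ⟨0, by omega⟩ with hi0
  set ir : Fin n := ⟨r - 1, by omega⟩ with hir
  set s : Finset (Fin n) := Finset.Ioo i0 ir with hs
  set z : Finset (Fin n) := Finset.Ici ir with hz
  have hscard : s.card = r - 2 := by
    rw [hs, Fin.card_Ioo]; simp [hi0, hir]; omega
  have hzcard : z.card = n - r + 1 := by
    rw [hz, Fin.card_Ici]; simp [hir]; omega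
  have hms : ∀ i : Fin n, i ∈ s ↔ 1 ≤ (i : ℕ) ∧ (i : ℕ) + 1 < r := by
    intro i
    rw [hs, Finset.mem_Ioo, Fin.lt_def, Fin.lt_def]; simp only [hi0, hir]; omega
  have hmz : ∀ i : Fin n, i ∈ z ↔ r ≤ (i : ℕ) + 1 := by
    intro i
    rw [hz, Finset.mem_Ici, Fin.le_def]; simp only [hir]; omega
  have hd : Disjoint s z := by
    rw [Finset.disjoint_left]; intro i h1 h2
    rw [hms] at h1; rw [hmz] at h2; omega
  have hnot : i0 ∉ s ∪ z := by
    rw [Finset.mem_union, hms, hmz]; simp only [hi0]; omega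
  have huniv : (Finset.univ : Finset (Fin n)) = insert i0 (s ∪ z) := by
    ext i
    simp only [Finset.mem_univ, Finset.mem_insert, Finset.mem_union, hms, hmz, true_iff, Fin.ext_iff,
      hi0]
    omega
  have hne0 : ∀ i ∈ s ∪ z, (i : ℕ) ≠ 0 := by
    intro i hi
    rw [Finset.mem_union, hms, hmz] at hi; omega
  set p : Fin n → ℝ := fun i => stdNormalCDF (θ i - t) with hp
  set q : Fin n → ℝ := fun i => stdNormalCDF (-t - θ i) with hq
  set B := pbE p (s ∪ z) (fun m => if m = r - 1 then 1 else 0) with hB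
  set A := pbE q (s ∪ z) (fun m => if m = r - 1 then 1 else 0) with hA
  have hszcard : (s ∪ z).card = n - 1 := by
    rw [Finset.card_union_of_disjoint hd, hscard, hzcard]; omega
  have hBpos : 0 < B := pbE_pos _ _ _ (fun i _ => ⟨stdNormalCDF_pos _, stdNormalCDF_lt_one _⟩)
    (by omega)
  have hpz : ∀ i ∈ z, p i = stdNormalCDF (-t) := by
    intro i hi
    simp only [hp]; rw [hθzero i ((hmz i).1 hi), zero_sub]
  have hqz : ∀ i ∈ z, q i = p i := by
    intro i hi
    rw [hpz i hi]
    simp only [hq]; rw [hθzero i ((hmz i).1 hi), sub_zero]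
  have hAB : A ≤ B := by
    refine pbE_mono q p z s hd ?_ hqz _ ?_
    · intro i hi
      have hi' := (hms i).1 hi
      have := hθpos i hi'.1 hi'.2
      exact ⟨(stdNormalCDF_pos _).le, stdNormalCDF_strictMono.monotone (by linarith),
        (stdNormalCDF_lt_one _).le⟩
    · intro j hj
      rw [hscard] at hj
      obtain ⟨k, hk⟩ : ∃ k, r - 1 = k + 1 + j := ⟨r - 1 - j - 1, by omega⟩
      have := pbE_const_anti p z _ hpz hxpos.le hxhalf.le (by
        rw [hzcard]; push_cast [Nat.cast_sub hrn]; linarith) k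
      have e1 : ∀ m : ℕ, (m + j = r - 1) = (m = k + 1) := fun m => propext (by omega)
      have e2 : ∀ m : ℕ, (m + (j + 1) = r - 1) = (m = k) := fun m => propext (by omega)
      simpa only [e1, e2] using this
  have hform : ∃ C : ℝ, (fun u : ℝ =>
        ((Measure.pi fun i : Fin n =>
            gaussianReal (if (i : ℕ) = 0 then u else θ i) 1)
          {x | r ≤ (Finset.univ.filter fun i : Fin n => x i ≤ -t).card ∨
               r ≤ (Finset.univ.filter fun i : Fin n => t ≤ x i).card}).toReal)
      = fun u => stdNormalCDF (-t - u) * A + stdNormalCDF (u - t) * B + C := by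
    refine ⟨pbE q (s ∪ z) (fun k => if r ≤ k then 1 else 0)
      + pbE p (s ∪ z) (fun k => if r ≤ k then 1 else 0), ?_⟩
    funext u
    obtain ⟨_, h1⟩ := pi_real_count
      (fun i : Fin n => gaussianReal (if (i : ℕ) = 0 then u else θ i) 1) (Set.Iic (-t))
      measurableSet_Iic r
    obtain ⟨hm, h2⟩ := pi_real_count
      (fun i : Fin n => gaussianReal (if (i : ℕ) = 0 then u else θ i) 1) (Set.Ici t)
      measurableSet_Ici r
    rw [huniv, pbE_tail_split _ _ _ hnot _ (by omega), ← huniv] at h1 h2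
    simp only [gauss_Iic, gauss_Ici, Set.mem_Iic, Set.mem_Ici] at h1 h2 hm
    have hdis : Disjoint {x : Fin n → ℝ | r ≤ (Finset.univ.filter fun i : Fin n => x i ≤ -t).card}
        {x : Fin n → ℝ | r ≤ (Finset.univ.filter fun i : Fin n => t ≤ x i).card} := by
      rw [Set.disjoint_left]
      intro x hx1 hx2
      simp only [Set.mem_ofPred_eq] at hx1 hx2
      have hdj : Disjoint (Finset.univ.filter fun i : Fin n => x i ≤ -t)
          (Finset.univ.filter fun i : Fin n => t ≤ x i) := by
        rw [Finset.disjoint_left]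
        intro i h3 h4
        have h3 := (Finset.mem_filter.1 h3).2
        have h4 := (Finset.mem_filter.1 h4).2
        linarith
      have := Finset.card_le_univ ((Finset.univ.filter fun i : Fin n => x i ≤ -t) ∪
          (Finset.univ.filter fun i : Fin n => t ≤ x i))
      rw [Finset.card_union_of_disjoint hdj, Fintype.card_fin] at this
      omega
    rw [Set.ofPred_or, ← measureReal_def, measureReal_union hdis hm, h1, h2]
    have c1 : ∀ h : ℕ → ℝ, pbE (fun i : Fin n => stdNormalCDF (-t - if (i : ℕ) = 0 then u else θ i))
        (s ∪ z) h = pbE q (s ∪ z) h := fun h => pbE_congr _ _ _ _ fun i hi => by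
      simp only [hq]; rw [if_neg (hne0 i hi)]
    have c2 : ∀ h : ℕ → ℝ, pbE (fun i : Fin n => stdNormalCDF ((if (i : ℕ) = 0 then u else θ i) - t))
        (s ∪ z) h = pbE p (s ∪ z) h := fun h => pbE_congr _ _ _ _ fun i hi => by
      simp only [hp]; rw [if_neg (hne0 i hi)]
    rw [c1, c1, c2, c2, if_pos (by simp [hi0])]
    ring
  obtain ⟨C, hform⟩ := hform
  have hder : ∀ u : ℝ, HasDerivAt
      (fun u => stdNormalCDF (-t - u) * A + stdNormalCDF (u - t) * B + C)
      (-gaussianPDFReal 0 1 (-t - u) * A + gaussianPDFReal 0 1 (u - t) * B) u := by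
    intro u
    have d1 : HasDerivAt (fun u : ℝ => stdNormalCDF (-t - u)) (-gaussianPDFReal 0 1 (-t - u)) u := by
      have := (stdNormalCDF_hasDerivAt (-t - u)).comp u ((hasDerivAt_id u).const_sub (-t))
      simpa using! this
    have d2 : HasDerivAt (fun u : ℝ => stdNormalCDF (u - t)) (gaussianPDFReal 0 1 (u - t)) u := by
      have := (stdNormalCDF_hasDerivAt (u - t)).comp u ((hasDerivAt_id u).sub_const t)
      simpa using! this
    exact ((d1.mul_const A).add (d2.mul_const B)).add_const C
  have hdpos : ∀ u : ℝ, 0 < u →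
      0 < deriv (fun u => stdNormalCDF (-t - u) * A + stdNormalCDF (u - t) * B + C) u := by
    intro u hu
    rw [(hder u).deriv]
    have h1 := pdf_lt ht0 hu
    have h2 := gaussianPDFReal_nonneg 0 1 (-t - u)
    have := mul_le_mul_of_nonneg_left hAB h2
    have := mul_lt_mul_of_pos_right h1 hBpos
    linarith
  rw [hform]
  refine ⟨fun u => (hder u).differentiableAt, hdpos, ?_⟩
  refine strictMonoOn_of_deriv_pos (convex_Ioi 0)
    (fun u _ => (hder u).continuousAt.continuousWithinAt) fun u hu => hdpos u ?_
  rw [interior_Ioi] at hu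
  exact hu
end

section
/- Let n ≥ 1, let r be an integer with (n+1)/2 < r ≤ n, let α ∈ (0, 1/2) and t = Φ⁻¹(1 − α/(n−r+1)). For θ ∈ ℝⁿ let c(θ) = P(#{i : Tᵢ ≤ −t} ≥ r or #{i : Tᵢ ≥ t} ≥ r), where T₁,…,Tₙ are independent with Tᵢ ~ N(θᵢ, 1). For s ≥ 0 let θ^(s) ∈ Θ₀ᵇ be the vector with θᵢ = s for i = 1,…,r−1 and θᵢ = 0 for i = r,…,n. Then lim_{s→∞} c(θ^(s)) = 1 − Φ(t)^{n−r+1}. -/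
open MeasureTheory ProbabilityTheory Filter

lemma gauss_tail (M : ℝ) :
    Tendsto (fun s : ℝ => (gaussianReal s 1).real (Set.Iic M)) atTop (nhds 0) := by
  have h : ∀ s : ℝ, (gaussianReal s 1).real (Set.Iic M) = cdf (gaussianReal 0 1) (M - s) := by
    intro s
    have h1 := gaussianReal_map_add_const (μ := 0) (v := 1) s
    rw [zero_add] at h1
    rw [← h1, cdf_eq_real, measureReal_def, measureReal_def,
      Measure.map_apply (by fun_prop) measurableSet_Iic]
    congr 2
    ext x
    simp [le_sub_iff_add_le]
  simp_rw [h]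
  refine (tendsto_cdf_atBot _).comp ?_
  exact tendsto_atBot_add_const_left _ M tendsto_neg_atTop_atBot |>.congr (fun s => by ring)

lemma card_tail (n r : ℕ) (h1 : 1 ≤ r) (hrn : r ≤ n) :
    (Finset.univ.filter fun i : Fin n => ¬ ((i : ℕ) + 1 < r)).card = n - r + 1 := by
  have e : (Finset.univ.filter fun i : Fin n => ¬ ((i : ℕ) + 1 < r)) =
      Finset.Ici (⟨r - 1, by omega⟩ : Fin n) := by
    ext i
    simp [Fin.le_def]
  rw [e, Fin.card_Ici]
  simp only
  omega

lemma card_head (n r : ℕ) (h1 : 1 ≤ r) (hrn : r ≤ n) :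
    (Finset.univ.filter fun i : Fin n => ((i : ℕ) + 1 < r)).card = r - 1 := by
  have := Finset.card_filter_add_card_filter_not (s := (Finset.univ : Finset (Fin n)))
    (fun i : Fin n => ((i : ℕ) + 1 < r))
  rw [card_tail n r h1 hrn, Finset.card_univ, Fintype.card_fin] at this
  omega

lemma good_prob (n r : ℕ) (h1 : 1 ≤ r) (hrn : r ≤ n) (t s : ℝ) :
    (Measure.pi fun i : Fin n => gaussianReal (if (i : ℕ) + 1 < r then s else 0) 1).real
      {x | ∃ i : Fin n, ¬ ((i : ℕ) + 1 < r) ∧ t ≤ x i} = 1 - stdNormalCDF t ^ (n - r + 1) := by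
  have e : {x : Fin n → ℝ | ∃ i : Fin n, ¬ ((i : ℕ) + 1 < r) ∧ t ≤ x i} =
      (Set.univ.pi fun i : Fin n => if (i : ℕ) + 1 < r then Set.univ else Set.Iio t)ᶜ := by
    ext x
    simp only [Set.mem_ofPred_eq, Set.mem_compl_iff, Set.mem_pi, Set.mem_univ, true_implies,
      not_forall]
    refine exists_congr fun i => ?_
    split_ifs with h <;> simp [h]
  rw [e, probReal_compl_eq_one_sub]
  · congr 1
    rw [measureReal_def, Measure.pi_pi, ENNReal.toReal_prod, ← card_tail n r h1 hrn,
      ← Finset.prod_const, Finset.prod_filter]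
    refine Finset.prod_congr rfl fun i _ => ?_
    by_cases h : (i : ℕ) + 1 < r
    · simp [h]
    · have : NullSingletonClass (gaussianReal 0 1) := nullSingletonClass_gaussianReal (by simp)
      simp only [h, if_false, not_false_eq_true, if_true, stdNormalCDF]
      rw [measure_congr (Iio_ae_eq_Iic (μ := gaussianReal 0 1))]
  · refine MeasurableSet.univ_pi fun i => ?_
    split_ifs
    · exact MeasurableSet.univ
    · exact measurableSet_Iio

lemma event_iff (n r : ℕ) (h1 : 1 ≤ r) (hrn : r ≤ n) (h2 : n + 1 < 2 * r) (t : ℝ)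
    (x : Fin n → ℝ) (hx : ∀ i : Fin n, (i : ℕ) + 1 < r → |t| < x i) :
    (r ≤ (Finset.univ.filter fun i : Fin n => x i ≤ -t).card ∨
      r ≤ (Finset.univ.filter fun i : Fin n => t ≤ x i).card) ↔
    ∃ i : Fin n, ¬ ((i : ℕ) + 1 < r) ∧ t ≤ x i := by
  constructor
  · rintro (h | h)
    · exfalso
      have : (Finset.univ.filter fun i : Fin n => x i ≤ -t).card ≤ n - r + 1 := by
        rw [← card_tail n r h1 hrn]
        refine Finset.card_le_card fun i hi => ?_
        simp only [Finset.mem_filter, Finset.mem_univ, true_and] at hi ⊢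
        intro hc
        have := hx i hc
        have := neg_le_abs t
        linarith
      omega
    · by_contra! hc
      have : (Finset.univ.filter fun i : Fin n => t ≤ x i).card ≤ r - 1 := by
        rw [← card_head n r h1 hrn]
        refine Finset.card_le_card fun i hi => ?_
        simp only [Finset.mem_filter, Finset.mem_univ, true_and] at hi ⊢
        by_contra hlt
        have := hc i (by omega)
        linarith
      omega
  · rintro ⟨j, hj, hjt⟩
    right
    have : (insert j (Finset.univ.filter fun i : Fin n => ((i : ℕ) + 1 < r))).card = r := by
      rw [Finset.card_insert_of_notMem (by simpa using hj), card_head n r h1 hrn]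
      omega
    calc r = _ := this.symm
      _ ≤ _ := by
        refine Finset.card_le_card fun i hi => ?_
        simp only [Finset.mem_insert, Finset.mem_filter, Finset.mem_univ, true_and] at hi ⊢
        rcases hi with rfl | hi
        · exact hjt
        · exact (le_abs_self t).trans (hx i hi).le

/-- **Limiting Type I error on the boundary of the null.** Let `(n+1)/2 < r ≤ n`,
`α ∈ (0,1/2)`, `t = Φ⁻¹(1 − α/(n−r+1))` and for `s ≥ 0` let `θ⁽ˢ⁾ ∈ Θ₀ᵇ` have its first
`r−1` coordinates equal to `s` and the rest `0`. With independent `Tᵢ ~ N(θ⁽ˢ⁾ᵢ, 1)`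
(modelled by the product measure), the rejection probability
`c(θ⁽ˢ⁾) = P(#{i : Tᵢ ≤ −t} ≥ r or #{i : Tᵢ ≥ t} ≥ r)` tends to `1 − Φ(t)^{n−r+1}` as
`s → ∞`. -/
theorem limit_type_one_error_on_boundary
    (n r : ℕ) (hn : 1 ≤ n) (hr1 : ((n : ℝ) + 1) / 2 < (r : ℝ)) (hrn : r ≤ n)
    (α : ℝ) (hα0 : 0 < α) (hα1 : α < 1 / 2)
    (t : ℝ) (ht : stdNormalCDF t = 1 - α / ((n : ℝ) - (r : ℝ) + 1)) :
    Tendsto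
      (fun s : ℝ =>
        ((Measure.pi fun i : Fin n =>
            gaussianReal (if (i : ℕ) + 1 < r then s else 0) 1)
          {x | r ≤ (Finset.univ.filter fun i : Fin n => x i ≤ -t).card ∨
               r ≤ (Finset.univ.filter fun i : Fin n => t ≤ x i).card}).toReal)
      atTop
      (nhds (1 - stdNormalCDF t ^ (n - r + 1))) := by
  have h2 : n + 1 < 2 * r := by
    have : (n : ℝ) + 1 < 2 * r := by linarith
    exact_mod_cast this
  have h1 : 1 ≤ r := by omega
  set μ : ℝ → Measure (Fin n → ℝ) := fun s => Measure.pi fun i : Fin n =>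
    gaussianReal (if (i : ℕ) + 1 < r then s else 0) 1 with hμ
  set E : Set (Fin n → ℝ) :=
    {x | r ≤ (Finset.univ.filter fun i : Fin n => x i ≤ -t).card ∨
               r ≤ (Finset.univ.filter fun i : Fin n => t ≤ x i).card} with hE
  set G : Set (Fin n → ℝ) := {x | ∃ i : Fin n, ¬ ((i : ℕ) + 1 < r) ∧ t ≤ x i} with hG
  set H : Finset (Fin n) := Finset.univ.filter fun i : Fin n => (i : ℕ) + 1 < r with hH
  set B : Set (Fin n → ℝ) := ⋃ i ∈ H, Function.eval i ⁻¹' Set.Iic |t| with hB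
  have hprob : ∀ s, IsProbabilityMeasure (μ s) := fun s => by
    simp only [hμ]; infer_instance
  have key : ∀ x, x ∉ B → (x ∈ E ↔ x ∈ G) := by
    intro x hxB
    refine event_iff n r h1 hrn h2 t x fun i hi => ?_
    by_contra hc
    refine hxB ?_
    simp only [hB, hH, Set.mem_iUnion]
    exact ⟨i, by simpa using hi, by simpa using hc⟩
  have hEG : E ⊆ G ∪ B := fun x hx => by
    by_cases hb : x ∈ B
    · exact Or.inr hb
    · exact Or.inl ((key x hb).1 hx)
  have hGE : G ⊆ E ∪ B := fun x hx => by
    by_cases hb : x ∈ B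
    · exact Or.inr hb
    · exact Or.inl ((key x hb).2 hx)
  have hBs : ∀ s, (μ s).real B ≤ (H.card : ℝ) * (gaussianReal s 1).real (Set.Iic |t|) := by
    intro s
    refine (measureReal_biUnion_finset_le _ _).trans ?_
    rw [← nsmul_eq_mul]
    refine Finset.sum_le_card_nsmul _ _ _ fun i hi => le_of_eq ?_
    have hi' : (i : ℕ) + 1 < r := by simpa [hH] using hi
    have := (measurePreserving_eval (fun i : Fin n =>
      gaussianReal (if (i : ℕ) + 1 < r then s else 0) 1) i).measureReal_preimage
      (measurableSet_Iic (a := |t|)).nullMeasurableSet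
    simp only [hi', if_true] at this
    exact this
  have hGs : ∀ s, (μ s).real G = 1 - stdNormalCDF t ^ (n - r + 1) :=
    fun s => good_prob n r h1 hrn t s
  have ht0 : Tendsto (fun s : ℝ => (H.card : ℝ) * (gaussianReal s 1).real (Set.Iic |t|))
      atTop (nhds 0) := by
    simpa using (gauss_tail |t|).const_mul (H.card : ℝ)
  rw [tendsto_iff_dist_tendsto_zero]
  refine squeeze_zero (fun s => dist_nonneg) (fun s => ?_) ht0
  refine le_trans ?_ (hBs s)
  have a1 := (measureReal_mono (μ := μ s) hEG).trans (measureReal_union_le G B)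
  have a2 := (measureReal_mono (μ := μ s) hGE).trans (measureReal_union_le E B)
  rw [hGs] at a1 a2
  change |(μ s).real E - _| ≤ _
  rw [abs_le]
  constructor <;> linarith
end

section
/- Let n ≥ 1, let r be an integer with (n+1)/2 < r ≤ n, let α ∈ (0, 1/2) and t = Φ⁻¹(1 − α/(n−r+1)). For θ ∈ ℝⁿ let c(θ) = P(#{i : Tᵢ ≤ −t} ≥ r or #{i : Tᵢ ≥ t} ≥ r), where T₁,…,Tₙ are independent with Tᵢ ~ N(θᵢ, 1). Then sup{c(θ) : θ ∈ Θ₀ᵇ} = 1 − (1 − α/(n−r+1))^{n−r+1}; moreover 1 − (1 − α/(n−r+1))^{n−r+1} ≤ α, with equality if and only if r = n. -/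
open MeasureTheory ProbabilityTheory

/-- The acceptance region. -/
def accE (t : ℝ) (n c d : ℕ) : Set (Fin n → ℝ) :=
  {x | (Finset.univ.filter fun i : Fin n => t ≤ x i).card ≤ c ∧
       (Finset.univ.filter fun i : Fin n => x i ≤ -t).card ≤ d}

lemma measurableSet_accE (t : ℝ) (n c d : ℕ) : MeasurableSet (accE t n c d) := by
  have h1 : Measurable fun x : Fin n → ℝ => (Finset.univ.filter fun i : Fin n => t ≤ x i).card := by
    simp_rw [Finset.card_filter]
    refine Finset.measurable_sum _ fun i _ => ?_
    exact Measurable.ite (measurableSet_le measurable_const (measurable_pi_apply i))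
      measurable_const measurable_const
  have h2 : Measurable fun x : Fin n → ℝ => (Finset.univ.filter fun i : Fin n => x i ≤ -t).card := by
    simp_rw [Finset.card_filter]
    refine Finset.measurable_sum _ fun i _ => ?_
    exact Measurable.ite (measurableSet_le (measurable_pi_apply i) measurable_const)
      measurable_const measurable_const
  exact (measurableSet_le h1 measurable_const).inter (measurableSet_le h2 measurable_const)

lemma pi_step {n : ℕ} (μ : Fin (n + 1) → Measure ℝ) [∀ i, IsProbabilityMeasure (μ i)]
    (S : Set (Fin (n + 1) → ℝ)) (hS : MeasurableSet S) (C : ENNReal)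
    (h : ∀ a : ℝ, C ≤ Measure.pi (fun i : Fin n => μ i.succ) {y | Fin.cons a y ∈ S}) :
    C ≤ Measure.pi μ S := by
  have hp := (measurePreserving_piFinSuccAbove μ 0).symm
  rw [← hp.measure_preimage hS.nullMeasurableSet, Measure.prod_apply (hp.measurable hS)]
  calc C = ∫⁻ _, C ∂(μ 0) := by simp
    _ ≤ _ := by
      refine lintegral_mono fun a => ?_
      refine (h a).trans (le_of_eq ?_)
      simp only [Fin.zero_succAbove]
      congr 1
      ext y
      rw [Set.mem_preimage, Set.mem_preimage, Set.mem_ofPred_eq]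
      have : (MeasurableEquiv.piFinSuccAbove (fun _ : Fin (n + 1) => ℝ) 0).symm (a, y)
          = (Fin.cons a y : Fin (n + 1) → ℝ) := Fin.insertNth_zero' a y
      rw [this]

lemma accE_cons (t : ℝ) (n c d : ℕ) (a : ℝ) (y : Fin n → ℝ) :
    (Fin.cons a y : Fin (n + 1) → ℝ) ∈ accE t (n + 1) c d ↔
      (if t ≤ a then 1 else 0) + (Finset.univ.filter fun i : Fin n => t ≤ y i).card ≤ c ∧
      (if a ≤ -t then 1 else 0) + (Finset.univ.filter fun i : Fin n => y i ≤ -t).card ≤ d := by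
  simp only [accE, Set.mem_ofPred_eq, Finset.card_filter, Fin.sum_univ_succ, Fin.cons_zero,
    Fin.cons_succ]

lemma accE_sec (t : ℝ) (ht : 0 < t) (n c d : ℕ) (a : ℝ) :
    accE t n (c - 1) d ⊆ {y | (Fin.cons a y : Fin (n + 1) → ℝ) ∈ accE t (n + 1) c d} ∧ 0 < c ∨
    accE t n c (d - 1) ⊆ {y | (Fin.cons a y : Fin (n + 1) → ℝ) ∈ accE t (n + 1) c d} ∧ 0 < d ∨
    c = 0 ∨ d = 0 := by
  rcases Nat.eq_zero_or_pos c with hc | hc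
  · simp [hc]
  rcases Nat.eq_zero_or_pos d with hd | hd
  · simp [hd]
  by_cases h : t ≤ a
  · left
    refine ⟨fun y hy => ?_, hc⟩
    rw [Set.mem_ofPred_eq, accE_cons t]
    have : ¬ a ≤ -t := by linarith
    simp only [accE, Set.mem_ofPred_eq] at hy
    rw [if_pos h, if_neg this]
    omega
  · right; left
    refine ⟨fun y hy => ?_, hd⟩
    rw [Set.mem_ofPred_eq, accE_cons t]
    simp only [accE, Set.mem_ofPred_eq] at hy
    rw [if_neg h]
    split_ifs <;> omega

lemma acc_bound (t : ℝ) (ht : 0 < t) (ν : Measure ℝ) [IsProbabilityMeasure ν] (q : ENNReal)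
    (hq1 : ν (Set.Iio t) = q) (hq2 : ν (Set.Ioi (-t)) = q) :
    ∀ (n f c d : ℕ) (μ : Fin n → Measure ℝ) [∀ i, IsProbabilityMeasure (μ i)],
      (∀ i : Fin n, f ≤ (i : ℕ) → μ i = ν) → f ≤ c → f ≤ d → n ≤ c + d →
      q ^ (n - f) ≤ Measure.pi μ (accE t n c d) := by
  have hq : q ≤ 1 := hq1 ▸ prob_le_one
  intro n
  induction n with
  | zero =>
    intro f c d μ _ _ _ _ _
    have : accE t 0 c d = Set.univ := by
      ext x; simp [accE]
    rw [this]; simp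
  | succ n ih =>
    intro f c d μ _ hμ hfc hfd hn
    -- c = 0 or d = 0 (then f = 0)
    rcases Nat.eq_zero_or_pos c with hc | hc
    · have hf : f = 0 := by omega
      subst hf; subst hc
      have hsub : Set.univ.pi (fun _ : Fin (n + 1) => Set.Iio t) ⊆ accE t (n + 1) 0 d := by
        intro x hx
        refine ⟨?_, ?_⟩
        · simp only [nonpos_iff_eq_zero, Finset.card_eq_zero, Finset.filter_eq_empty_iff]
          intro i _
          exact not_le.2 (hx i trivial)
        · exact (Finset.card_le_univ _).trans (by simp; omega)
      refine le_trans (le_of_eq ?_) (measure_mono hsub)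
      rw [Measure.pi_pi]
      simp [fun i => hμ i (Nat.zero_le _), hq1]
    rcases Nat.eq_zero_or_pos d with hd | hd
    · have hf : f = 0 := by omega
      subst hf; subst hd
      have hsub : Set.univ.pi (fun _ : Fin (n + 1) => Set.Ioi (-t)) ⊆ accE t (n + 1) c 0 := by
        intro x hx
        refine ⟨?_, ?_⟩
        · exact (Finset.card_le_univ _).trans (by simp; omega)
        · simp only [nonpos_iff_eq_zero, Finset.card_eq_zero, Finset.filter_eq_empty_iff]
          intro i _
          exact not_le.2 (hx i trivial)
      refine le_trans (le_of_eq ?_) (measure_mono hsub)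
      rw [Measure.pi_pi]
      simp [fun i => hμ i (Nat.zero_le _), hq2]
    refine pi_step μ _ (measurableSet_accE ..) _ fun a => ?_
    have hpow : q ^ (n + 1 - f) ≤ q ^ (n - (f - 1)) :=
      pow_le_pow_right_of_le_one' hq (by omega)
    refine hpow.trans ?_
    have hμ' : ∀ i : Fin n, f - 1 ≤ (i : ℕ) → μ i.succ = ν := fun i hi =>
      hμ i.succ (by simp; omega)
    rcases accE_sec t ht n c d a with h | h | h | h
    · exact (ih (f - 1) (c - 1) d (fun i => μ i.succ) hμ' (by omega) (by omega) (by omega)).trans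
        (measure_mono h.1)
    · exact (ih (f - 1) c (d - 1) (fun i => μ i.succ) hμ' (by omega) (by omega) (by omega)).trans
        (measure_mono h.1)
    · omega
    · omega

lemma gauss_sym (t : ℝ) : gaussianReal 0 1 (Set.Ioi (-t)) = gaussianReal 0 1 (Set.Iio t) := by
  have h := gaussianReal_map_neg (μ := 0) (v := 1)
  rw [neg_zero] at h
  conv_lhs => rw [← h]
  rw [Measure.map_apply measurable_neg measurableSet_Ioi]
  congr 1
  ext x
  simp

lemma gauss_Iio (t : ℝ) : gaussianReal 0 1 (Set.Iio t) = gaussianReal 0 1 (Set.Iic t) := by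
  haveI := nullSingletonClass_gaussianReal (μ := 0) (v := 1) one_ne_zero
  exact measure_congr Iio_ae_eq_Iic

lemma t_pos (t : ℝ) (h : 1 / 2 < stdNormalCDF t) : 0 < t := by
  by_contra hn
  push Not at hn
  have h1 : gaussianReal 0 1 (Set.Iic t) ≤ gaussianReal 0 1 (Set.Iic 0) :=
    measure_mono (Set.Iic_subset_Iic.2 hn)
  have h2 := gauss_sym 0
  rw [neg_zero, gauss_Iio] at h2
  have h3 : gaussianReal 0 1 (Set.Iic (0 : ℝ)) + gaussianReal 0 1 (Set.Ioi (0 : ℝ)) = 1 := by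
    rw [← Set.compl_Iic]
    exact prob_add_prob_compl measurableSet_Iic
  rw [h2] at h3
  have h4 := congrArg ENNReal.toReal h3
  rw [ENNReal.toReal_add (measure_ne_top _ _) (measure_ne_top _ _)] at h4
  have h5 := ENNReal.toReal_mono (measure_ne_top _ _) h1
  unfold stdNormalCDF at h
  simp only [ENNReal.toReal_one] at h4
  linarith

lemma gauss_tendsto (t : ℝ) :
    Filter.Tendsto (fun s : ℝ => (gaussianReal s 1 (Set.Ici t)).toReal) Filter.atTop (nhds 1) := by
  have h1 : ∀ s : ℝ, gaussianReal s 1 (Set.Ici t) = gaussianReal 0 1 (Set.Ici (t - s)) := by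
    intro s
    have h := gaussianReal_map_add_const (μ := 0) (v := 1) s
    rw [zero_add] at h
    rw [← h, Measure.map_apply (measurable_add_const s) measurableSet_Ici]
    congr 1
    ext x
    simp
  simp_rw [h1]
  have h2 : Filter.Tendsto (fun s : ℝ => t - s) Filter.atTop Filter.atBot :=
    tendsto_const_nhds.add_atBot Filter.tendsto_neg_atTop_atBot
  have h3 := (tendsto_measure_Ici_atBot (gaussianReal 0 1)).comp h2
  rw [measure_univ] at h3
  have h4 := (ENNReal.tendsto_toReal ENNReal.one_ne_top).comp h3
  simpa [Function.comp_def] using h4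

/-- The rejection region. -/
def rejE (t : ℝ) (n r : ℕ) : Set (Fin n → ℝ) :=
  {x | r ≤ (Finset.univ.filter fun i : Fin n => x i ≤ -t).card ∨
               r ≤ (Finset.univ.filter fun i : Fin n => t ≤ x i).card}

lemma rejE_eq (t : ℝ) (n r : ℕ) (hr : 1 ≤ r) : rejE t n r = (accE t n (r - 1) (r - 1))ᶜ := by
  ext x
  simp only [rejE, accE, Set.mem_ofPred_eq, Set.mem_compl_iff]
  omega

lemma rej_upper (t : ℝ) (ht : 0 < t) (n r : ℕ) (hr : 1 ≤ r) (hr2 : n + 2 ≤ 2 * r) (hrn : r ≤ n)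
    (θ : Fin n → ℝ) (hθ : ∀ i : Fin n, r ≤ (i : ℕ) + 1 → θ i = 0) :
    ((Measure.pi fun i : Fin n => gaussianReal (θ i) 1) (rejE t n r)).toReal
      ≤ 1 - stdNormalCDF t ^ (n - r + 1) := by
  have h := acc_bound t ht (gaussianReal 0 1) (gaussianReal 0 1 (Set.Iio t)) rfl (gauss_sym t)
    n (r - 1) (r - 1) (r - 1) (fun i : Fin n => gaussianReal (θ i) 1)
    (fun i hi => by rw [hθ i (by omega)]) le_rfl le_rfl (by omega)
  rw [gauss_Iio] at h
  have h2 := ENNReal.toReal_mono (measure_ne_top _ _) h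
  rw [ENNReal.toReal_pow] at h2
  rw [rejE_eq t n r hr]
  have h3 := probReal_compl_eq_one_sub (μ := Measure.pi fun i : Fin n => gaussianReal (θ i) 1)
    (measurableSet_accE t n (r - 1) (r - 1))
  simp only [Measure.real] at h3
  rw [h3]
  have e : n - (r - 1) = n - r + 1 := by omega
  rw [e] at h2
  unfold stdNormalCDF
  linarith

lemma card_free (n r : ℕ) (hr : 1 ≤ r) (hrn : r ≤ n) :
    (Finset.univ.filter fun i : Fin n => (i : ℕ) + 1 < r).card = r - 1 := by
  have := Fin.card_filter_val_lt (n := n) (m := r - 1)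
  have e : (Finset.univ.filter fun i : Fin n => (i : ℕ) + 1 < r)
    = (Finset.univ.filter fun i : Fin n => (i : ℕ) < r - 1) := by
    ext i; simp; omega
  rw [e, this]; omega

lemma card_null (n r : ℕ) (hr : 1 ≤ r) (hrn : r ≤ n) :
    (Finset.univ.filter fun i : Fin n => ¬ (i : ℕ) + 1 < r).card = n - r + 1 := by
  have h1 := Finset.card_filter_add_card_filter_not (s := (Finset.univ : Finset (Fin n)))
    (fun i : Fin n => (i : ℕ) + 1 < r)
  rw [card_free n r hr hrn] at h1
  simp at h1 ⊢
  omega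

lemma rej_lower (t : ℝ) (n r : ℕ) (hr : 1 ≤ r) (hrn : r ≤ n) (s : ℝ) :
    (gaussianReal s 1 (Set.Ici t)).toReal ^ (r - 1) * (1 - stdNormalCDF t ^ (n - r + 1)) ≤
    ((Measure.pi fun i : Fin n => gaussianReal (if (i : ℕ) + 1 < r then s else 0) 1)
      (rejE t n r)).toReal := by
  set P := Measure.pi fun i : Fin n => gaussianReal (if (i : ℕ) + 1 < r then s else 0) 1 with hP
  set A : Set (Fin n → ℝ) :=
    Set.univ.pi (fun i : Fin n => if (i : ℕ) + 1 < r then Set.Ici t else Set.univ) with hA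
  set B : Set (Fin n → ℝ) :=
    Set.univ.pi (fun i : Fin n => if (i : ℕ) + 1 < r then Set.Ici t else Set.Iio t) with hB
  have hPA : P A = gaussianReal s 1 (Set.Ici t) ^ (r - 1) := by
    rw [hP, hA, Measure.pi_pi, ← card_free n r hr hrn, ← Finset.prod_const, Finset.prod_filter]
    refine Finset.prod_congr rfl fun i _ => ?_
    split_ifs <;> simp
  have hPB : P B = gaussianReal s 1 (Set.Ici t) ^ (r - 1) *
      gaussianReal 0 1 (Set.Iic t) ^ (n - r + 1) := by
    rw [hP, hB, Measure.pi_pi, ← gauss_Iio, ← card_null n r hr hrn, ← card_free n r hr hrn,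
      ← Finset.prod_const, ← Finset.prod_const, ← Finset.prod_ite]
    refine Finset.prod_congr rfl fun i _ => ?_
    split_ifs <;> simp
  have hBA : B ⊆ A := by
    refine Set.pi_mono fun i _ => ?_
    split_ifs <;> simp
  have hBm : MeasurableSet B := by
    refine MeasurableSet.univ_pi fun i => ?_
    split_ifs
    · exact measurableSet_Ici
    · exact measurableSet_Iio
  have hsub : A \ B ⊆ rejE t n r := by
    rintro x ⟨hxA, hxB⟩
    right
    have h1 : ∀ i : Fin n, (i : ℕ) + 1 < r → t ≤ x i := by
      intro i hi
      have := hxA i trivial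
      simpa [hi] using this
    have h2 : ∃ j : Fin n, ¬ (j : ℕ) + 1 < r ∧ t ≤ x j := by
      by_contra hcon
      push Not at hcon
      apply hxB
      intro i _
      by_cases hi : (i : ℕ) + 1 < r
      · simpa [hi] using h1 i hi
      · simpa [hi] using hcon i (by omega)
    obtain ⟨j, hj, hjt⟩ := h2
    have h3 : insert j (Finset.univ.filter fun i : Fin n => (i : ℕ) + 1 < r) ⊆
        Finset.univ.filter fun i : Fin n => t ≤ x i := by
      intro i hi
      simp only [Finset.mem_insert, Finset.mem_filter, Finset.mem_univ, true_and] at hi ⊢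
      rcases hi with rfl | hi
      · exact hjt
      · exact h1 i hi
    have h4 := Finset.card_le_card h3
    rw [Finset.card_insert_of_notMem (by simpa using hj), card_free n r hr hrn] at h4
    omega
  have h5 := ENNReal.toReal_mono (measure_ne_top _ _) (measure_mono (μ := P) hsub)
  refine le_trans (le_of_eq ?_) h5
  rw [measure_sdiff hBA hBm.nullMeasurableSet (measure_ne_top _ _),
    ENNReal.toReal_sub_of_le (measure_mono hBA) (measure_ne_top _ _), hPA, hPB,
    ENNReal.toReal_mul, ENNReal.toReal_pow, ENNReal.toReal_pow]
  unfold stdNormalCDF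
  ring

lemma bern_strict (p : ℝ) (h0 : 0 < p) (h1 : p < 1) (m : ℕ) :
    1 - ((m : ℝ) + 2) * p < (1 - p) ^ (m + 2) := by
  induction m with
  | zero => norm_num; nlinarith
  | succ m ih =>
    rw [show m + 1 + 2 = (m + 2) + 1 by ring, pow_succ]
    push_cast
    have : (1 - ((m : ℝ) + 2) * p) * (1 - p) < (1 - p) ^ (m + 2) * (1 - p) :=
      mul_lt_mul_of_pos_right ih (by linarith)
    nlinarith [mul_pos h0 h0, mul_nonneg (Nat.cast_nonneg (α := ℝ) m) (mul_pos h0 h0).le]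

/-- **Supremum of the Type I error over the boundary null set.** Let `(n+1)/2 < r ≤ n`,
`α ∈ (0,1/2)`, `t = Φ⁻¹(1 − α/(n−r+1))`, and for `θ ∈ ℝⁿ` let
`c(θ) = P(#{i : Tᵢ ≤ −t} ≥ r or #{i : Tᵢ ≥ t} ≥ r)` for independent `Tᵢ ~ N(θᵢ,1)`
(modelled by the product measure). Then over `Θ₀ᵇ` (first `r−1` coordinates nonnegative,
rest zero), `sup c = 1 − (1 − α/(n−r+1))^{n−r+1}`, and this value is `≤ α` with equality
iff `r = n`. -/
theorem sup_type_one_error_on_boundary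
    (n r : ℕ) (hn : 1 ≤ n) (hr1 : ((n : ℝ) + 1) / 2 < (r : ℝ)) (hrn : r ≤ n)
    (α : ℝ) (hα0 : 0 < α) (hα1 : α < 1 / 2)
    (t : ℝ) (ht : stdNormalCDF t = 1 - α / ((n : ℝ) - (r : ℝ) + 1)) :
    sSup {c : ℝ | ∃ θ : Fin n → ℝ,
        (∀ i : Fin n, (i : ℕ) + 1 < r → 0 ≤ θ i) ∧
        (∀ i : Fin n, r ≤ (i : ℕ) + 1 → θ i = 0) ∧
        c = ((Measure.pi fun i : Fin n => gaussianReal (θ i) 1)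
          {x | r ≤ (Finset.univ.filter fun i : Fin n => x i ≤ -t).card ∨
               r ≤ (Finset.univ.filter fun i : Fin n => t ≤ x i).card}).toReal}
      = 1 - (1 - α / ((n : ℝ) - (r : ℝ) + 1)) ^ (n - r + 1) ∧
    1 - (1 - α / ((n : ℝ) - (r : ℝ) + 1)) ^ (n - r + 1) ≤ α ∧
    (1 - (1 - α / ((n : ℝ) - (r : ℝ) + 1)) ^ (n - r + 1) = α ↔ r = n) := by
  have hr2 : n + 2 ≤ 2 * r := by
    have h : (n : ℝ) + 1 < 2 * r := by linarith
    have h' : n + 1 < 2 * r := by exact_mod_cast h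
    omega
  have hr : 1 ≤ r := by omega
  have hm : (n : ℝ) - (r : ℝ) + 1 = ((n - r + 1 : ℕ) : ℝ) := by
    push_cast [Nat.cast_sub hrn]; ring
  have hm1 : (1 : ℝ) ≤ ((n - r + 1 : ℕ) : ℝ) := by
    exact_mod_cast Nat.le_add_left 1 (n - r)
  rw [hm] at ht ⊢
  set p : ℝ := α / ((n - r + 1 : ℕ) : ℝ) with hp
  have hmp : ((n - r + 1 : ℕ) : ℝ) * p = α := by
    rw [hp]; field_simp
  have hp0 : 0 < p := div_pos hα0 (by linarith)
  have hp1 : p < 1 / 2 := by nlinarith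
  have htp : 0 < t := t_pos t (by rw [ht]; linarith)
  refine ⟨?_, ?_, ?_⟩
  · apply IsLUB.csSup_eq
    · constructor
      · rintro c ⟨θ, -, hθ, rfl⟩
        rw [← ht]
        exact rej_upper t htp n r hr hr2 hrn θ hθ
      · intro b hb
        have hlim := ((gauss_tendsto t).pow (r - 1)).mul_const (1 - (1 - p) ^ (n - r + 1))
        rw [one_pow, one_mul] at hlim
        refine le_of_tendsto hlim ?_
        filter_upwards [Filter.eventually_ge_atTop (0 : ℝ)] with s hs
        have h1 := rej_lower t n r hr hrn s
        rw [ht] at h1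
        refine h1.trans (hb ⟨fun i : Fin n => if (i : ℕ) + 1 < r then s else 0, ?_, ?_, rfl⟩)
        · intro i hi
          simp [hi, hs]
        · intro i hi
          simp [not_lt.2 hi]
    · exact ⟨_, fun _ => 0, fun _ _ => le_rfl, fun _ _ => rfl, rfl⟩
  · have := one_add_mul_le_pow (a := -p) (by linarith) (n - r + 1)
    rw [← sub_eq_add_neg] at this
    linarith
  · constructor
    · intro h
      by_contra hne
      obtain ⟨k, hk⟩ : ∃ k, n - r + 1 = k + 2 := ⟨n - r - 1, by omega⟩
      have := bern_strict p hp0 (by linarith) k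
      rw [hk] at h hmp
      push_cast at hmp
      linarith
    · intro h
      have h1 : n - r + 1 = 1 := by omega
      rw [h1] at hmp ⊢
      push_cast at hmp
      rw [pow_one]
      linarith
end

section
/- Let n = 20 and α = 1/10. For every integer r with 2 ≤ r ≤ 7, setting t = Φ⁻¹(1 − α/(n−r+1)), there exists θ ∈ ℝ²⁰ with fewer than r strictly positive components and fewer than r strictly negative components such that, for independent T₁,…,T₂₀ with Tᵢ ~ N(θᵢ, 1), P(#{i : Tᵢ ≤ −t} ≥ r or #{i : Tᵢ ≥ t} ≥ r) > α. In particular, for 2 ≤ r ≤ (n+1)/2 the uncorrected p-value min{p⁻_{r/n}, p⁺_{r/n}} is in general not a valid p-value for H_{r/n}. -/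
open MeasureTheory ProbabilityTheory

lemma aux_Ici (M t : ℝ) : (gaussianReal M 1).real (Set.Ici t) = (gaussianReal (-M) 1).real (Set.Iic (-t)) := by
  rw [← gaussianReal_map_neg, map_measureReal_apply measurable_neg measurableSet_Iic]
  congr 1
  ext x
  simp

lemma aux_Iic (M t : ℝ) : (gaussianReal (-M) 1).real (Set.Iic (-t)) = cdf (gaussianReal 0 1) (M - t) := by
  have h : gaussianReal (-M) 1 = (gaussianReal 0 1).map (fun x => x + (-M)) := by
    rw [gaussianReal_map_add_const]; simp
  rw [h, map_measureReal_apply (by fun_prop) measurableSet_Iic, cdf_eq_real]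
  congr 1
  ext x
  simp only [Set.mem_preimage, Set.mem_Iic]
  constructor <;> intro h <;> linarith

lemma aux_lim (t : ℝ) : Filter.Tendsto (fun M => (gaussianReal (-M) 1).real (Set.Iic (-t)))
    Filter.atTop (nhds 1) := by
  simp_rw [aux_Iic]
  exact (tendsto_cdf_atTop _).comp (Filter.tendsto_atTop_add_const_right _ _ Filter.tendsto_id)

lemma aux_lim' (t : ℝ) : Filter.Tendsto (fun M => (gaussianReal M 1).real (Set.Ici t))
    Filter.atTop (nhds 1) := by
  simp_rw [aux_Ici]
  exact aux_lim t

lemma aux_mid (t q : ℝ) (hq : q ≤ 1 / 2) (h : stdNormalCDF t = 1 - q) :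
    (gaussianReal 0 1).real (Set.Ioo (-t) t) ≤ 1 - 2 * q := by
  by_cases ht : 0 < t
  · have h1 : (gaussianReal 0 1).real (Set.Iic t) = 1 - q := h
    have h2 : q ≤ (gaussianReal 0 1).real (Set.Ici t) := by
      have := probReal_compl_eq_one_sub (μ := gaussianReal 0 1) (measurableSet_Iic (a := t))
      have h3 : (gaussianReal 0 1).real (Set.Iic t)ᶜ ≤ (gaussianReal 0 1).real (Set.Ici t) := by
        refine measureReal_mono ?_
        rw [Set.compl_Iic]; exact Set.Ioi_subset_Ici_self
      linarith
    have h4 := aux_Ici 0 t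
    rw [neg_zero] at h4
    have h5 : (gaussianReal 0 1).real (Set.Iic (-t) ∪ Set.Ici t) =
        (gaussianReal 0 1).real (Set.Iic (-t)) + (gaussianReal 0 1).real (Set.Ici t) := by
      apply measureReal_union _ measurableSet_Ici
      rw [Set.disjoint_left]
      intro x hx hx'
      simp only [Set.mem_Iic, Set.mem_Ici] at hx hx'
      linarith
    have h6 := probReal_compl_eq_one_sub (μ := gaussianReal 0 1)
      (measurableSet_Ioo (a := -t) (b := t))
    have h7 : (Set.Ioo (-t) t)ᶜ = Set.Iic (-t) ∪ Set.Ici t := by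
      ext x
      simp only [Set.mem_compl_iff, Set.mem_Ioo, Set.mem_union, Set.mem_Iic, Set.mem_Ici,
        not_and_or, not_lt]
    rw [h7] at h6
    linarith
  · rw [Set.Ioo_eq_empty (by linarith)]
    simp; linarith

lemma aux_pi (μ : Fin 20 → Measure ℝ) [∀ i, IsProbabilityMeasure (μ i)] (s : Fin 20 → Set ℝ) :
    (Measure.pi μ).real (Set.univ.pi s) = ∏ i, (μ i).real (s i) := by
  simp [measureReal_def, Measure.pi_pi, ENNReal.toReal_prod]

noncomputable def auxTheta (k : ℕ) (M : ℝ) (i : Fin 20) : ℝ :=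
  if i.val < k then M else if i.val < 2 * k then -M else 0

noncomputable def auxG (k : ℕ) (t : ℝ) (i : Fin 20) : Set ℝ :=
  if i.val < k then Set.Ici t else if i.val < 2 * k then Set.Iic (-t) else Set.univ

noncomputable def auxB (k : ℕ) (t : ℝ) (i : Fin 20) : Set ℝ :=
  if i.val < 2 * k then Set.univ else Set.Ioo (-t) t

lemma aux_G (k : ℕ) (t : ℝ) : Filter.Tendsto (fun M => (Measure.pi fun i : Fin 20 =>
    gaussianReal (auxTheta k M i) 1).real (Set.univ.pi (auxG k t))) Filter.atTop (nhds 1) := by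
  simp_rw [aux_pi]
  rw [show (1 : ℝ) = ∏ i : Fin 20, 1 by simp]
  apply tendsto_finsetProd
  intro i _
  unfold auxTheta auxG
  split_ifs
  · exact aux_lim' t
  · exact aux_lim t
  · simp

lemma aux_B (k : ℕ) (t q M : ℝ) (hk : 2 * k ≤ 20) (hq : q ≤ 1 / 2) (h : stdNormalCDF t = 1 - q) :
    (Measure.pi fun i : Fin 20 =>
    gaussianReal (auxTheta k M i) 1).real (Set.univ.pi (auxB k t)) ≤ (1 - 2 * q) ^ (20 - 2 * k) := by
  rw [aux_pi]
  calc _ ≤ ∏ i : Fin 20, (if i.val < 2 * k then 1 else (1 - 2 * q)) := by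
        apply Finset.prod_le_prod
        · intros; positivity
        · intro i _
          unfold auxTheta auxB
          by_cases h2 : i.val < 2 * k
          · simp [h2]
          · have h3 : ¬ i.val < k := by omega
            simp only [h2, h3, if_false]
            exact aux_mid t q hq h
    _ = _ := by
        rw [Fin.prod_univ_eq_prod_range (fun i => if i < 2 * k then 1 else (1 - 2 * q)) 20,
          Finset.prod_ite]
        simp only [Finset.prod_const, one_pow, one_mul]
        congr 1
        have : (Finset.range 20).filter (fun i => ¬ i < 2 * k) = Finset.Ico (2 * k) 20 := by
          ext i; simp; omega
        rw [this, Nat.card_Ico]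

lemma aux_card1 : ∀ k ≤ 6, (Finset.univ.filter fun i : Fin 20 => i.val < k).card = k := by
  decide

lemma aux_card2 : ∀ k ≤ 6,
    (Finset.univ.filter fun i : Fin 20 => k ≤ i.val ∧ i.val < 2 * k).card = k := by
  decide

lemma aux_count (k : ℕ) (S : Finset (Fin 20)) (p : Fin 20 → Prop) [DecidablePred p]
    (hS : S.card = k) (j : Fin 20) (hj : j ∉ S) (hpj : p j) (hp : ∀ i ∈ S, p i) :
    k + 1 ≤ (Finset.univ.filter p).card := by
  rw [← hS, ← Finset.card_insert_of_notMem hj]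
  apply Finset.card_le_card
  intro i hi
  rcases Finset.mem_insert.1 hi with rfl | hi
  · simpa using hpj
  · simpa using hp i hi

lemma aux_subset (k : ℕ) (hk : k ≤ 6) (t : ℝ) :
    Set.univ.pi (auxG k t) ⊆ Set.univ.pi (auxB k t) ∪
      {x | k + 1 ≤ (Finset.univ.filter fun i : Fin 20 => x i ≤ -t).card ∨
               k + 1 ≤ (Finset.univ.filter fun i : Fin 20 => t ≤ x i).card} := by
  intro x hx
  by_cases hB : x ∈ Set.univ.pi (auxB k t)
  · exact Or.inl hB
  right
  simp only [Set.mem_pi, Set.mem_univ, true_imp_iff, not_forall] at hB hx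
  obtain ⟨j, hj⟩ := hB
  unfold auxB at hj
  by_cases h2 : j.val < 2 * k
  · simp [h2] at hj
  simp only [h2, if_false, Set.mem_Ioo, not_and_or, not_lt] at hj
  rcases hj with hj | hj
  · left
    apply aux_count k _ _ (aux_card2 k hk) j (by simp; omega) hj
    intro i hi
    simp only [Finset.mem_filter, Finset.mem_univ, true_and] at hi
    have := hx i
    simpa [auxG, hi.2, not_lt.2 hi.1] using this
  · right
    apply aux_count k _ _ (aux_card1 k hk) j (by simp; omega) hj
    intro i hi
    simp only [Finset.mem_filter, Finset.mem_univ, true_and] at hi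
    have := hx i
    simpa [auxG, hi] using this

lemma aux_main (k : ℕ) (hk : k ≤ 6) (t q : ℝ) (hq : q ≤ 1 / 2) (h : stdNormalCDF t = 1 - q)
    (hnum : (1 - 2 * q) ^ (20 - 2 * k) < 9 / 10) :
    ∃ θ : Fin 20 → ℝ,
      (Finset.univ.filter fun i => 0 < θ i).card < k + 1 ∧
      (Finset.univ.filter fun i => θ i < 0).card < k + 1 ∧
      (1 / 10 : ℝ) <
        ((Measure.pi fun i : Fin 20 => gaussianReal (θ i) 1)
          {x | k + 1 ≤ (Finset.univ.filter fun i : Fin 20 => x i ≤ -t).card ∨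
               k + 1 ≤ (Finset.univ.filter fun i : Fin 20 => t ≤ x i).card}).toReal := by
  have hev := (aux_G k t).eventually_const_lt
    (show 1 / 10 + (1 - 2 * q) ^ (20 - 2 * k) < 1 by linarith)
  obtain ⟨M, hM, hM0⟩ := (hev.and (Filter.eventually_gt_atTop 0)).exists
  refine ⟨auxTheta k M, ?_, ?_, ?_⟩
  · rw [Nat.lt_succ_iff]
    refine le_trans (Finset.card_le_card ?_) (aux_card1 k hk).le
    intro i
    simp only [Finset.mem_filter, Finset.mem_univ, true_and]
    unfold auxTheta
    split_ifs <;> intro h <;> first | assumption | linarith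
  · rw [Nat.lt_succ_iff]
    refine le_trans (Finset.card_le_card ?_) (aux_card2 k hk).le
    intro i
    simp only [Finset.mem_filter, Finset.mem_univ, true_and]
    unfold auxTheta
    split_ifs <;> intro h <;> first | omega | linarith
  · have h1 := aux_B k t q M (by omega) hq h
    have h2 := measureReal_mono (μ := Measure.pi fun i : Fin 20 => gaussianReal (auxTheta k M i) 1)
      (aux_subset k hk t)
    have h3 := h2.trans (measureReal_union_le _ _)
    rw [← measureReal_def]
    linarith

/-- **Counterexample for small `r`.** For `n = 20`, `α = 1/10` and every integer
`2 ≤ r ≤ 7`, with `t = Φ⁻¹(1 − α/(n−r+1))`, there exists a null parameter `θ ∈ ℝ²⁰`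
(fewer than `r` strictly positive and fewer than `r` strictly negative components) such
that for independent `Tᵢ ~ N(θᵢ,1)` (modelled by the product measure),
`P(#{i : Tᵢ ≤ −t} ≥ r or #{i : Tᵢ ≥ t} ≥ r) > α`: the uncorrected p-value
`min{p⁻_{r/n}, p⁺_{r/n}}` is in general not valid for `H_{r/n}` when `r ≤ (n+1)/2`. -/
theorem uncorrected_pvalue_invalid_small_r :
    ∀ r : ℕ, 2 ≤ r → r ≤ 7 →
    ∀ t : ℝ, stdNormalCDF t = 1 - (1 / 10 : ℝ) / ((20 : ℝ) - (r : ℝ) + 1) →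
    ∃ θ : Fin 20 → ℝ,
      (Finset.univ.filter fun i => 0 < θ i).card < r ∧
      (Finset.univ.filter fun i => θ i < 0).card < r ∧
      (1 / 10 : ℝ) <
        ((Measure.pi fun i : Fin 20 => gaussianReal (θ i) 1)
          {x | r ≤ (Finset.univ.filter fun i : Fin 20 => x i ≤ -t).card ∨
               r ≤ (Finset.univ.filter fun i : Fin 20 => t ≤ x i).card}).toReal := by
  intro r hr2 hr7 t ht
  obtain ⟨k, rfl⟩ : ∃ k, r = k + 1 := ⟨r - 1, by omega⟩
  have hk : k ≤ 6 := by omega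
  have hk1 : 1 ≤ k := by omega
  apply aux_main k hk t _ _ ht
  · clear ht hr2 hr7
    interval_cases k <;> norm_num
  · clear ht hr2 hr7
    interval_cases k <;> norm_num
end
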